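/- Special case of the balanced truncation error bound for truncating a single state: let A ∈ ℝ^{N×N} be Hurwitz, B ∈ ℝ^{N×p}, L ∈ ℝ^{q×N}, and Σ = diag(σ₁, …, σ_N) with σ₁ ≥ … ≥ σ_N > 0 pairwise distinct, satisfying A·Σ + Σ·Aᵀ = −B·Bᵀ and Aᵀ·Σ + Σ·A = −Lᵀ·L. Let Ã, B̃, L̃ be the blocks of size (N−1) obtained by deleting the last state. Then sup_{ω ∈ ℝ} ‖L(iωI − A)⁻¹B − L̃(iωI − Ã)⁻¹B̃‖ ≤ 2σ_N. -/

import Mathlib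

open Matrix Complex

/-- `A` is Hurwitz if every eigenvalue of `A` over `ℂ` has negative real part. -/
def IsHurwitz {N : ℕ} (A : Matrix (Fin N) (Fin N) ℝ) : Prop :=
  ∀ μ ∈ spectrum ℂ (A.map (Complex.ofReal)), μ.re < 0

/-- The operator norm of a `q × p` complex matrix, viewed as a linear map
between the Euclidean spaces `ℂ^p` and `ℂ^q`. -/
noncomputable def matOpNorm {q p : ℕ} (M : Matrix (Fin q) (Fin p) ℂ) : ℝ :=
  ‖LinearMap.toContinuousLinearMap (Matrix.toEuclideanLin M)‖

/-!
Subtracting an imaginary multiple of the identity from `A` preserves both Lyapunov equations, so it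
suffices to compare the steady-state gains of a balanced system and of its truncation.
For an input `u`, let `d` be the difference of the two steady states; then `g = A d` lives on the
deleted states, where the Gramian is the scalar `c`. Put `Aᴴ y = g`. The Lyapunov equations give
`‖C d‖² = -2c Re ⟨d, g⟩` and `‖Bᴴ y‖² = -2c Re ⟨y, g⟩`, and the two right-hand sides agree because
`⟨y, g⟩ = ⟨y, A d⟩ = ⟨g, d⟩`. They also equal `2c Re ⟨Bᴴ y, u⟩`, since the truncated steady state
vanishes on the deleted states. Hence `‖C d‖² ≤ 2|c| ‖Bᴴ y‖ ‖u‖ = 2|c| ‖C d‖ ‖u‖`.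
-/

open scoped Matrix.Norms.L2Operator

theorem l2_opNorm_le_bound {𝕜 p q : Type*} [RCLike 𝕜] [Fintype p] [Fintype q]
    [DecidableEq p] {M : Matrix q p 𝕜} {c : ℝ} (hc : 0 ≤ c)
    (h : ∀ u : p → 𝕜, ‖WithLp.toLp 2 (M *ᵥ u)‖ ≤ c * ‖WithLp.toLp 2 u‖) : ‖M‖ ≤ c := by
  rw [l2_opNorm_def]
  exact ContinuousLinearMap.opNorm_le_bound _ hc fun u => h u.ofLp

section Realization

variable {𝕜 n p q : Type*} [RCLike 𝕜] [Fintype n] [DecidableEq n]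

/-- `H(s) = C (sI - A)⁻¹ B`, with the junk value `0` at the eigenvalues of `A`. -/
noncomputable def transferFunction (A : Matrix n n 𝕜) (B : Matrix n p 𝕜) (C : Matrix q n 𝕜)
    (s : 𝕜) : Matrix q p 𝕜 :=
  C * (s • (1 : Matrix n n 𝕜) - A)⁻¹ * B

/-- The realization `(A, B, C)` satisfies both Lyapunov equations with the same real diagonal
matrix `diag σ`; the order and the signs of the `σ i` are not part of the notion. -/
structure IsBalanced [Fintype p] [Fintype q] (A : Matrix n n 𝕜) (B : Matrix n p 𝕜)
    (C : Matrix q n 𝕜) (σ : n → ℝ) : Prop where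
  controllability :
    A * diagonal (fun i => (σ i : 𝕜)) + diagonal (fun i => (σ i : 𝕜)) * Aᴴ = -(B * Bᴴ)
  observability :
    Aᴴ * diagonal (fun i => (σ i : 𝕜)) + diagonal (fun i => (σ i : 𝕜)) * A = -(Cᴴ * C)

theorem transferFunction_sub_smul_one_zero (A : Matrix n n 𝕜) (B : Matrix n p 𝕜)
    (C : Matrix q n 𝕜) (s : 𝕜) :
    transferFunction (A - s • 1) B C 0 = transferFunction A B C s := by
  simp only [transferFunction, zero_smul, zero_sub, neg_sub]

theorem exists_steadyState [Fintype p] {A : Matrix n n 𝕜} (hA : IsUnit A) (B : Matrix n p 𝕜)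
    (C : Matrix q n 𝕜) (u : p → 𝕜) :
    ∃ x, A *ᵥ x = -(B *ᵥ u) ∧ transferFunction A B C 0 *ᵥ u = C *ᵥ x := by
  have hdet : IsUnit (-A).det := (isUnit_iff_isUnit_det _).1 hA.neg
  refine ⟨(-A)⁻¹ *ᵥ (B *ᵥ u), ?_, ?_⟩
  · rw [eq_neg_iff_add_eq_zero, ← neg_eq_zero, neg_add, ← neg_mulVec, mulVec_mulVec,
      mul_nonsing_inv _ hdet, one_mulVec, add_neg_cancel]
  · simp only [transferFunction, zero_smul, zero_sub, mulVec_mulVec, Matrix.mul_assoc]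

theorem isUnit_sub_smul_one_of_notMem_spectrum {A : Matrix n n 𝕜} {s : 𝕜}
    (hs : s ∉ spectrum 𝕜 A) : IsUnit (A - s • 1) := by
  rw [spectrum.notMem_iff, Algebra.algebraMap_eq_smul_one] at hs
  simpa only [neg_sub] using hs.neg

end Realization

section KeptStates

variable {R m n : Type*} [Fintype n] {f : m → n}

theorem dotProduct_eq_zero_of_support [NonUnitalNonAssocSemiring R] {v w : n → R}
    (hv : ∀ j, v (f j) = 0) (hw : ∀ i ∉ Set.range f, w i = 0) : v ⬝ᵥ w = 0 := by
  refine Finset.sum_eq_zero fun i _ => ?_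
  by_cases hi : i ∈ Set.range f
  · obtain ⟨j, rfl⟩ := hi
    rw [hv, zero_mul]
  · rw [hw i hi, mul_zero]

theorem diagonal_mulVec_eq_smul [DecidableEq n] [NonUnitalNonAssocSemiring R] {d : n → R} {c : R}
    (hd : ∀ i ∉ Set.range f, d i = c) {g : n → R} (hg : ∀ j, g (f j) = 0) :
    diagonal d *ᵥ g = c • g := by
  ext i
  rw [mulVec_diagonal, Pi.smul_apply, smul_eq_mul]
  by_cases hi : i ∈ Set.range f
  · obtain ⟨j, rfl⟩ := hi
    rw [hg, mul_zero, mul_zero]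
  · rw [hd i hi]

theorem mulVec_extend_zero [Fintype m] [NonUnitalNonAssocSemiring R] {q : Type*}
    (hf : Function.Injective f) (M : Matrix q n R) (v : m → R) :
    M *ᵥ Function.extend f v 0 = M.submatrix id f *ᵥ v := by
  ext i
  refine (Fintype.sum_of_injective f hf _ _ (fun j hj => ?_) fun j => ?_).symm
  · rw [Function.extend_apply' _ _ j hj, Pi.zero_apply, mul_zero]
  · simp only [hf.extend_apply, submatrix_apply, id]

end KeptStates

namespace IsBalanced

variable {𝕜 m n p q : Type*} [RCLike 𝕜] [Fintype n] [Fintype p] [Fintype q] [DecidableEq n]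
  {A : Matrix n n 𝕜} {B : Matrix n p 𝕜} {C : Matrix q n 𝕜} {σ : n → ℝ}

theorem dual (h : IsBalanced A B C σ) : IsBalanced Aᴴ Cᴴ Bᴴ σ where
  controllability := by rw [conjTranspose_conjTranspose, conjTranspose_conjTranspose,
    h.observability]
  observability := by rw [conjTranspose_conjTranspose, conjTranspose_conjTranspose,
    h.controllability]

theorem sub_smul_one (h : IsBalanced A B C σ) {s : 𝕜} (hs : star s = -s) :
    IsBalanced (A - s • 1) B C σ where
  controllability := by
    rw [← h.controllability, conjTranspose_sub, conjTranspose_smul, conjTranspose_one, hs]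
    simp only [sub_mul, mul_sub, smul_mul_assoc, mul_smul_comm, one_mul, mul_one]
    module
  observability := by
    rw [← h.observability, conjTranspose_sub, conjTranspose_smul, conjTranspose_one, hs]
    simp only [sub_mul, mul_sub, smul_mul_assoc, mul_smul_comm, one_mul, mul_one]
    module

theorem norm_sq_output (h : IsBalanced A B C σ) (w : n → 𝕜) :
    ‖WithLp.toLp 2 (C *ᵥ w)‖ ^ 2 =
      -2 * RCLike.re (star w ⬝ᵥ (diagonal (fun i => (σ i : 𝕜)) *ᵥ (A *ᵥ w))) := by
  set D : Matrix n n 𝕜 := diagonal fun i => (σ i : 𝕜) with hD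
  have hDstar : Dᴴ = D := by
    rw [hD, diagonal_conjTranspose]
    congr
    ext i
    exact RCLike.conj_ofReal (σ i)
  have hadj : star w ⬝ᵥ ((Aᴴ * D) *ᵥ w) = star (star w ⬝ᵥ (D *ᵥ (A *ᵥ w))) := by
    rw [star_dotProduct, star_mulVec, conjTranspose_mul, conjTranspose_conjTranspose, hDstar,
      ← dotProduct_mulVec, mulVec_mulVec]
  have hlyap : star (C *ᵥ w) ⬝ᵥ (C *ᵥ w) =
      -(star (star w ⬝ᵥ (D *ᵥ (A *ᵥ w))) + star w ⬝ᵥ (D *ᵥ (A *ᵥ w))) := by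
    rw [star_mulVec, ← dotProduct_mulVec, mulVec_mulVec, ← neg_neg (Cᴴ * C), ← h.observability,
      neg_mulVec, dotProduct_neg, add_mulVec, dotProduct_add, hadj, mulVec_mulVec]
  rw [norm_sq_eq_re_inner (𝕜 := 𝕜), EuclideanSpace.inner_toLp_toLp, dotProduct_comm, hlyap,
    map_neg, map_add, ← starRingEnd_apply, RCLike.conj_re]
  ring

section Truncation

variable {f : m → n} {c : ℝ}

theorem norm_sq_output_of_mulVec_kept_eq_zero (h : IsBalanced A B C σ)
    (hdel : ∀ i ∉ Set.range f, σ i = c) {w : n → 𝕜} (hw : ∀ j, (A *ᵥ w) (f j) = 0) :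
    ‖WithLp.toLp 2 (C *ᵥ w)‖ ^ 2 = -2 * c * RCLike.re (star w ⬝ᵥ (A *ᵥ w)) := by
  have hdel' : ∀ i ∉ Set.range f, (σ i : 𝕜) = c := fun i hi => congrArg _ (hdel i hi)
  rw [h.norm_sq_output, diagonal_mulVec_eq_smul hdel' hw, dotProduct_smul, smul_eq_mul,
    RCLike.re_ofReal_mul, mul_assoc]

theorem exists_adjointState (h : IsBalanced A B C σ) (hA : IsUnit A)
    (hdel : ∀ i ∉ Set.range f, σ i = c) {u : p → 𝕜} {x z : n → 𝕜} (hx : A *ᵥ x = -(B *ᵥ u))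
    (hz : ∀ j, (A *ᵥ z) (f j) = -(B *ᵥ u) (f j)) (hzdel : ∀ i ∉ Set.range f, z i = 0) :
    ∃ y, ‖WithLp.toLp 2 (Bᴴ *ᵥ y)‖ = ‖WithLp.toLp 2 (C *ᵥ (x - z))‖ ∧
      ‖WithLp.toLp 2 (C *ᵥ (x - z))‖ ^ 2 =
        2 * c * RCLike.re (inner 𝕜 (WithLp.toLp 2 (Bᴴ *ᵥ y)) (WithLp.toLp 2 u)) := by
  set d := x - z with hd
  have hg : ∀ j, (A *ᵥ d) (f j) = 0 := fun j => by
    rw [hd, mulVec_sub, Pi.sub_apply, hx, hz, Pi.neg_apply, sub_self]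
  obtain ⟨y, hy⟩ : ∃ y, Aᴴ *ᵥ y = A *ᵥ d :=
    mulVec_surjective_iff_isUnit.2 hA.star (A *ᵥ d)
  have hadj (v : n → 𝕜) : star y ⬝ᵥ (A *ᵥ v) = star (A *ᵥ d) ⬝ᵥ v := by
    rw [← hy, star_mulVec, conjTranspose_conjTranspose, dotProduct_mulVec]
  have hpair : star (A *ᵥ d) ⬝ᵥ d =
      -inner 𝕜 (WithLp.toLp 2 (Bᴴ *ᵥ y)) (WithLp.toLp 2 u) := by
    have hgz : star (A *ᵥ d) ⬝ᵥ z = 0 :=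
      dotProduct_eq_zero_of_support (fun j => by rw [Pi.star_apply, hg, star_zero]) hzdel
    calc star (A *ᵥ d) ⬝ᵥ d = star (A *ᵥ d) ⬝ᵥ x := by
          nth_rewrite 2 [hd]
          rw [dotProduct_sub, hgz, sub_zero]
      _ = -(star y ⬝ᵥ (B *ᵥ u)) := by rw [← hadj, hx, dotProduct_neg]
      _ = _ := by rw [EuclideanSpace.inner_toLp_toLp, star_mulVec, conjTranspose_conjTranspose,
          dotProduct_comm u, dotProduct_mulVec]
  have hCd : ‖WithLp.toLp 2 (C *ᵥ d)‖ ^ 2 =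
      2 * c * RCLike.re (inner 𝕜 (WithLp.toLp 2 (Bᴴ *ᵥ y)) (WithLp.toLp 2 u)) := by
    rw [h.norm_sq_output_of_mulVec_kept_eq_zero hdel hg, ← star_star (star d ⬝ᵥ (A *ᵥ d)),
      star_dotProduct, star_star, hpair, ← starRingEnd_apply, RCLike.conj_re, map_neg]
    ring
  refine ⟨y, ?_, hCd⟩
  rw [← sq_eq_sq₀ (norm_nonneg _) (norm_nonneg _), hCd,
    h.dual.norm_sq_output_of_mulVec_kept_eq_zero hdel (by rwa [hy]), hy, hadj, hpair, map_neg]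
  ring

theorem norm_output_sub_le (h : IsBalanced A B C σ) (hA : IsUnit A)
    (hdel : ∀ i ∉ Set.range f, σ i = c) {u : p → 𝕜} {x z : n → 𝕜} (hx : A *ᵥ x = -(B *ᵥ u))
    (hz : ∀ j, (A *ᵥ z) (f j) = -(B *ᵥ u) (f j)) (hzdel : ∀ i ∉ Set.range f, z i = 0) :
    ‖WithLp.toLp 2 (C *ᵥ (x - z))‖ ≤ 2 * |c| * ‖WithLp.toLp 2 u‖ := by
  obtain ⟨y, hBy, hCd⟩ := h.exists_adjointState hA hdel hx hz hzdel
  rcases (norm_nonneg (WithLp.toLp 2 (C *ᵥ (x - z)))).eq_or_lt with hzero | hpos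
  · rw [← hzero]
    positivity
  refine le_of_mul_le_mul_left ?_ hpos
  calc ‖WithLp.toLp 2 (C *ᵥ (x - z))‖ * ‖WithLp.toLp 2 (C *ᵥ (x - z))‖
      = 2 * (c * RCLike.re (inner 𝕜 (WithLp.toLp 2 (Bᴴ *ᵥ y)) (WithLp.toLp 2 u))) := by
        rw [← sq, hCd, mul_assoc]
    _ ≤ 2 * (|c| * (‖WithLp.toLp 2 (Bᴴ *ᵥ y)‖ * ‖WithLp.toLp 2 u‖)) := by
        refine mul_le_mul_of_nonneg_left ((le_abs_self _).trans ?_) zero_le_two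
        rw [abs_mul]
        gcongr
        exact (RCLike.abs_re_le_norm _).trans (norm_inner_le_norm _ _)
    _ = ‖WithLp.toLp 2 (C *ᵥ (x - z))‖ * (2 * |c| * ‖WithLp.toLp 2 u‖) := by
        rw [hBy]
        ring

theorem conjTranspose_mulVec_diagonal_mulVec (h : IsBalanced A B C σ)
    (hdel : ∀ i ∉ Set.range f, σ i = c) {w : n → 𝕜} (hw : ∀ i ∉ Set.range f, w i = 0)
    (hAw : ∀ j, (A *ᵥ w) (f j) = 0) :
    Aᴴ *ᵥ (diagonal (fun i => (σ i : 𝕜)) *ᵥ w) = -((c : 𝕜) • (A *ᵥ w)) := by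
  have hortho : star w ⬝ᵥ (A *ᵥ w) = 0 := by
    rw [dotProduct_comm]
    exact dotProduct_eq_zero_of_support hAw fun i hi => by rw [Pi.star_apply, hw i hi, star_zero]
  have hCw : C *ᵥ w = 0 := by
    have := h.norm_sq_output_of_mulVec_kept_eq_zero hdel hAw
    simpa only [hortho, map_zero, mul_zero, sq_eq_zero_iff, norm_eq_zero,
      WithLp.toLp_eq_zero] using this
  have hdel' : ∀ i ∉ Set.range f, (σ i : 𝕜) = c := fun i hi => congrArg _ (hdel i hi)
  rw [eq_neg_iff_add_eq_zero, ← diagonal_mulVec_eq_smul hdel' hAw, mulVec_mulVec, mulVec_mulVec,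
    ← add_mulVec, h.observability, neg_mulVec, ← mulVec_mulVec, hCw, mulVec_zero, neg_zero]

/-- A kernel vector of the truncated matrix, extended by zero, is an eigenvector of `diag σ ^ 2` for
`c ^ 2`, and no eigenvector for `c ^ 2` is supported on the kept states. -/
theorem isUnit_submatrix [Fintype m] [DecidableEq m] (h : IsBalanced A B C σ) (hA : IsUnit A)
    (hf : Function.Injective f) (hdel : ∀ i ∉ Set.range f, σ i = c)
    (hkept : ∀ j, σ (f j) ^ 2 ≠ c ^ 2) : IsUnit (A.submatrix f f) := by
  rw [← mulVec_injective_iff_isUnit]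
  refine (injective_iff_map_eq_zero (A.submatrix f f).mulVecLin).2 fun v hv => ?_
  set D : Matrix n n 𝕜 := diagonal fun i => (σ i : 𝕜) with hD
  set w : n → 𝕜 := Function.extend f v 0 with hw
  have hwdel : ∀ i ∉ Set.range f, w i = 0 := fun i hi => Function.extend_apply' _ _ i hi
  have hDwdel : ∀ i ∉ Set.range f, (D *ᵥ w) i = 0 := fun i hi => by
    rw [hD, mulVec_diagonal, hwdel i hi, mul_zero]
  have hAw : ∀ j, (A *ᵥ w) (f j) = 0 := fun j => by
    rw [hw, mulVec_extend_zero hf]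
    exact congrFun hv j
  have hdual : Aᴴ *ᵥ (D *ᵥ w) = -((c : 𝕜) • (A *ᵥ w)) :=
    h.conjTranspose_mulVec_diagonal_mulVec hdel hwdel hAw
  have hprimal : A *ᵥ (D *ᵥ (D *ᵥ w)) = A *ᵥ (((c : 𝕜) ^ 2) • w) := by
    have := h.dual.conjTranspose_mulVec_diagonal_mulVec hdel hDwdel fun j => by
      rw [hdual, Pi.neg_apply, Pi.smul_apply, hAw, smul_zero, neg_zero]
    rw [conjTranspose_conjTranspose, hdual] at this
    rw [this, mulVec_smul, smul_neg, neg_neg, smul_smul, sq]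
  have heig : D *ᵥ (D *ᵥ w) = ((c : 𝕜) ^ 2) • w := mulVec_injective_iff_isUnit.2 hA hprimal
  ext j
  have hj : ((σ (f j) ^ 2 - c ^ 2 : ℝ) : 𝕜) * v j = 0 := by
    have := congrFun heig (f j)
    rw [hD, mulVec_diagonal, mulVec_diagonal, Pi.smul_apply, hw, hf.extend_apply,
      smul_eq_mul] at this
    push_cast
    linear_combination this
  exact (mul_eq_zero.1 hj).resolve_left
    (RCLike.ofReal_ne_zero.2 (sub_ne_zero.2 (hkept j)))

theorem norm_transferFunction_zero_sub_le [Fintype m] [DecidableEq m] [DecidableEq p]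
    (h : IsBalanced A B C σ) (hA : IsUnit A) (hf : Function.Injective f)
    (hdel : ∀ i ∉ Set.range f, σ i = c) (hkept : ∀ j, σ (f j) ^ 2 ≠ c ^ 2) :
    ‖transferFunction A B C 0 -
      transferFunction (A.submatrix f f) (B.submatrix f id) (C.submatrix id f) 0‖ ≤ 2 * |c| := by
  refine l2_opNorm_le_bound (by positivity) fun u => ?_
  obtain ⟨x, hx, hCx⟩ := exists_steadyState hA B C u
  obtain ⟨v, hv, hCv⟩ := exists_steadyState (h.isUnit_submatrix hA hf hdel hkept)
    (B.submatrix f id) (C.submatrix id f) u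
  rw [sub_mulVec, hCx, hCv, ← mulVec_extend_zero hf, ← mulVec_sub]
  refine h.norm_output_sub_le hA hdel hx (fun j => ?_) (Function.extend_apply' _ _)
  rw [mulVec_extend_zero hf]
  exact congrFun hv j

end Truncation

end IsBalanced

section RealRealization

variable (𝕜 : Type*) {n p q : Type*} [RCLike 𝕜] [Fintype n] [Fintype p] [Fintype q]
  [DecidableEq n] {A : Matrix n n ℝ} {B : Matrix n p ℝ} {C : Matrix q n ℝ} {σ : n → ℝ}

theorem conjTranspose_map_algebraMap_real {m n : Type*} (M : Matrix m n ℝ) :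
    (M.map (algebraMap ℝ 𝕜))ᴴ = Mᵀ.map (algebraMap ℝ 𝕜) :=
  Matrix.ext fun _ _ => RCLike.conj_ofReal _

theorem lyapunov_map_algebraMap_real (h : A * diagonal σ + diagonal σ * Aᵀ = -(B * Bᵀ)) :
    A.map (algebraMap ℝ 𝕜) * diagonal (fun i => (σ i : 𝕜)) +
      diagonal (fun i => (σ i : 𝕜)) * Aᵀ.map (algebraMap ℝ 𝕜) =
        -(B.map (algebraMap ℝ 𝕜) * Bᵀ.map (algebraMap ℝ 𝕜)) := by
  have hσ : diagonal (fun i => (σ i : 𝕜)) = (diagonal σ).map (algebraMap ℝ 𝕜) :=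
    (diagonal_map RCLike.ofReal_zero).symm
  rw [hσ, ← Matrix.map_mul, ← Matrix.map_mul, ← Matrix.map_mul, ← Matrix.map_add _ (map_add _), h]
  exact Matrix.map_neg _ (map_neg _) _

theorem isBalanced_map_algebraMap_real (hctrb : A * diagonal σ + diagonal σ * Aᵀ = -(B * Bᵀ))
    (hobsv : Aᵀ * diagonal σ + diagonal σ * A = -(Cᵀ * C)) :
    IsBalanced (A.map (algebraMap ℝ 𝕜)) (B.map (algebraMap ℝ 𝕜)) (C.map (algebraMap ℝ 𝕜)) σ where
  controllability := by
    simpa only [conjTranspose_map_algebraMap_real] using lyapunov_map_algebraMap_real 𝕜 hctrb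
  observability := by
    simpa only [conjTranspose_map_algebraMap_real, transpose_transpose] using
      lyapunov_map_algebraMap_real 𝕜 (A := Aᵀ) (B := Cᵀ) hobsv

end RealRealization

theorem matOpNorm_eq_l2_opNorm {q p : ℕ} (M : Matrix (Fin q) (Fin p) ℂ) : matOpNorm M = ‖M‖ :=
  rfl

theorem eq_last_of_notMem_range_castLE {N : ℕ} (hN : 0 < N) {i : Fin N}
    (hi : i ∉ Set.range (Fin.castLE (Nat.sub_le N 1))) : i = ⟨N - 1, Nat.sub_lt hN one_pos⟩ := by
  rw [Fin.range_castLE, Set.mem_ofPred_eq] at hi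
  ext
  dsimp only
  lia

theorem sq_castLE_ne_sq_last {N : ℕ} (hN : 0 < N) {σ : Fin N → ℝ} (hmono : StrictAnti σ)
    (hpos : ∀ i, 0 < σ i) (j : Fin (N - 1)) :
    σ (Fin.castLE (Nat.sub_le N 1) j) ^ 2 ≠ σ ⟨N - 1, Nat.sub_lt hN one_pos⟩ ^ 2 :=
  (pow_lt_pow_left₀ (hmono j.isLt) (hpos _).le two_ne_zero).ne'

theorem IsHurwitz.I_mul_ofReal_notMem_spectrum {N : ℕ} {A : Matrix (Fin N) (Fin N) ℝ}
    (hA : IsHurwitz A) (ω : ℝ) : I * ω ∉ spectrum ℂ (A.map ofReal) :=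
  fun hmem => by simpa using hA _ hmem

/-- The deleted states, those outside the range of `f`, form a whole level set of `σ ^ 2` on which
`σ` takes the single value `c`. -/
theorem balanced_truncation_one_step_error_bound_general {𝕜 m n p q : Type*} [RCLike 𝕜]
    [Fintype m] [Fintype n] [Fintype p] [Fintype q] [DecidableEq m] [DecidableEq n]
    [DecidableEq p] {A : Matrix n n 𝕜} {B : Matrix n p 𝕜} {C : Matrix q n 𝕜} {σ : n → ℝ}
    (h : IsBalanced A B C σ) {f : m → n} (hf : Function.Injective f) {c : ℝ}
    (hdel : ∀ i ∉ Set.range f, σ i = c) (hkept : ∀ j, σ (f j) ^ 2 ≠ c ^ 2)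
    {s : 𝕜} (hs : star s = -s) (hsA : s ∉ spectrum 𝕜 A) :
    ‖transferFunction A B C s -
      transferFunction (A.submatrix f f) (B.submatrix f id) (C.submatrix id f) s‖ ≤ 2 * |c| := by
  have hsub : (A - s • 1).submatrix f f = A.submatrix f f - s • 1 := by
    rw [submatrix_sub, Pi.sub_apply, Pi.sub_apply, submatrix_smul, Pi.smul_apply, Pi.smul_apply,
      submatrix_one f hf]
  simpa only [hsub, transferFunction_sub_smul_one_zero] using
    (h.sub_smul_one hs).norm_transferFunction_zero_sub_le
      (isUnit_sub_smul_one_of_notMem_spectrum hsA) hf hdel hkept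

/-- One-step balanced truncation error bound: for a stable
balanced realization `(A, B, L)` with Gramians `Σ = diag(σ₁ > … > σ_N > 0)`,
deleting the last state gives a reduced model `(Ã, B̃, L̃)` with
`‖L(iωI − A)⁻¹B − L̃(iωI − Ã)⁻¹B̃‖ ≤ 2σ_N` for every real `ω`. -/
theorem balanced_truncation_one_step_error_bound {N p q : ℕ} (hN : 0 < N)
    (A : Matrix (Fin N) (Fin N) ℝ) (hA : IsHurwitz A)
    (B : Matrix (Fin N) (Fin p) ℝ) (L : Matrix (Fin q) (Fin N) ℝ)
    (σ : Fin N → ℝ) (hmono : StrictAnti σ) (hpos : ∀ i, 0 < σ i)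
    (hctrb : A * Matrix.diagonal σ + Matrix.diagonal σ * Aᵀ = -(B * Bᵀ))
    (hobsv : Aᵀ * Matrix.diagonal σ + Matrix.diagonal σ * A = -(Lᵀ * L)) :
    letI h : N - 1 ≤ N := Nat.sub_le N 1
    letI At := A.submatrix (Fin.castLE h) (Fin.castLE h)
    letI Bt := B.submatrix (Fin.castLE h) id
    letI Lt := L.submatrix id (Fin.castLE h)
    ∀ ω : ℝ,
      matOpNorm
        (L.map ofReal *
            ((Complex.I * ω) • (1 : Matrix (Fin N) (Fin N) ℂ)
              - A.map ofReal)⁻¹ * B.map ofReal -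
          Lt.map ofReal *
            ((Complex.I * ω) • (1 : Matrix (Fin (N - 1)) (Fin (N - 1)) ℂ)
              - At.map ofReal)⁻¹ * Bt.map ofReal)
        ≤ 2 * σ ⟨N - 1, Nat.sub_lt hN one_pos⟩ := by
  intro ω
  rw [matOpNorm_eq_l2_opNorm, ← abs_of_pos (hpos ⟨N - 1, Nat.sub_lt hN one_pos⟩)]
  exact balanced_truncation_one_step_error_bound_general
    (isBalanced_map_algebraMap_real ℂ hctrb hobsv) (Fin.castLE_injective (Nat.sub_le N 1))
    (fun i hi => congrArg σ (eq_last_of_notMem_range_castLE hN hi))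
    (sq_castLE_ne_sq_last hN hmono hpos) (by simp) (hA.I_mul_ofReal_notMem_spectrum ω)
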